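/- arXiv:math/9912039 — 8 statements merged into one kernel-verified Lean document; each statement's English description precedes it below -/
import Mathlib

section
/- Let a and b be real numbers with b ≠ 0. Then the imaginary unit i belongs to the subfield ℚ(a+bi, a−bi) of ℂ (the field generated over ℚ by z = a+bi and its complex conjugate) if and only if b belongs to the subfield ℚ(a, b²) of ℝ (the field generated over ℚ by a and b²). -/
/-!
Write `K = ℚ(a, b²) ⊆ ℝ` and `L = ℚ(z, z̄) ⊆ ℂ`. Since `(b i)² = -b² ∈ K`, the set `K + K · b i` is a
subfield of `ℂ`; it contains `z` and `z̄`, hence `L`. As `b² ∈ K` is nonzero, membership of `w` in it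
says that both `re w` and `b · im w` lie in `K` (`re_mem_and_im_mul_mem`), and for `w = i` the second
condition is `b ∈ K`. Conversely `a = (z + z̄) / 2`, `b i = (z - z̄) / 2` and `b² = -(b i)²` lie in `L`,
so `K ⊆ L`, and `b ∈ K` gives `i = (b i) / b ∈ L`.
-/

/-- The elements of `ℚ(z, z̄)` lie in `K + K · b i` for every subfield `K` of `ℝ` containing `a` and
`b²`. Membership of `w` is expressed by `re w ∈ K` and `b · im w ∈ K`. -/
lemma re_mem_and_im_mul_mem {K : IntermediateField ℚ ℝ} {a b : ℝ} (hb : b ≠ 0)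
    (ha : a ∈ K) (hb2 : b ^ 2 ∈ K) {w : ℂ}
    (hw : w ∈ IntermediateField.adjoin ℚ
      ({(a : ℂ) + (b : ℂ) * Complex.I, (a : ℂ) - (b : ℂ) * Complex.I} : Set ℂ)) :
    w.re ∈ K ∧ w.im * b ∈ K := by
  have im_mul_im {x y : ℂ} (hx : x.im * b ∈ K) (hy : y.im * b ∈ K) : x.im * y.im ∈ K := by
    have h := div_mem (mul_mem hx hy) hb2
    rwa [show x.im * b * (y.im * b) / b ^ 2 = x.im * y.im by field_simp] at h
  induction hw using IntermediateField.adjoin_induction with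
  | mem x hx =>
    rcases hx with rfl | rfl
    · simpa [← sq] using And.intro ha hb2
    · simpa [← sq] using And.intro ha hb2
  | algebraMap q =>
    simp
  | add x y _ _ hx hy =>
    exact ⟨by simpa using add_mem hx.1 hy.1, by simpa [add_mul] using add_mem hx.2 hy.2⟩
  | inv x _ hx =>
    have hn : Complex.normSq x ∈ K := by
      rw [Complex.normSq_apply]
      exact add_mem (mul_mem hx.1 hx.1) (im_mul_im hx.2 hx.2)
    refine ⟨by simpa using div_mem hx.1 hn, ?_⟩
    have h := div_mem (neg_mem hx.2) hn
    rwa [Complex.inv_im, show -x.im / Complex.normSq x * b = -(x.im * b) / Complex.normSq x by ring]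
  | mul x y _ _ hx hy =>
    refine ⟨by simpa using sub_mem (mul_mem hx.1 hy.1) (im_mul_im hx.2 hy.2), ?_⟩
    have h := add_mem (mul_mem hx.1 hy.2) (mul_mem hx.2 hy.1)
    rwa [Complex.mul_im, show (x.re * y.im + x.im * y.re) * b
      = x.re * (y.im * b) + x.im * b * y.re by ring]

/-- For `z = a + b i` with `b ≠ 0`, the imaginary unit `i` lies in `ℚ(z, z̄)`
(the subfield of `ℂ` generated over `ℚ` by `z` and its conjugate) if and only if
`b` lies in the subfield `ℚ(a, b²)` of `ℝ`. -/
theorem thalian_criterion (a b : ℝ) (hb : b ≠ 0) :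
    Complex.I ∈ IntermediateField.adjoin ℚ
        ({(a : ℂ) + (b : ℂ) * Complex.I, (a : ℂ) - (b : ℂ) * Complex.I} : Set ℂ) ↔
      b ∈ IntermediateField.adjoin ℚ ({a, b ^ 2} : Set ℝ) := by
  constructor
  · intro h
    have ha : a ∈ IntermediateField.adjoin ℚ ({a, b ^ 2} : Set ℝ) :=
      IntermediateField.subset_adjoin _ _ (by simp)
    have hb2 : b ^ 2 ∈ IntermediateField.adjoin ℚ ({a, b ^ 2} : Set ℝ) :=
      IntermediateField.subset_adjoin _ _ (by simp)
    simpa using (re_mem_and_im_mul_mem hb ha hb2 h).2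
  · intro h
    set L := IntermediateField.adjoin ℚ
      ({(a : ℂ) + (b : ℂ) * Complex.I, (a : ℂ) - (b : ℂ) * Complex.I} : Set ℂ)
    have hz : (a : ℂ) + b * Complex.I ∈ L := IntermediateField.subset_adjoin _ _ (by simp)
    have hz' : (a : ℂ) - b * Complex.I ∈ L := IntermediateField.subset_adjoin _ _ (by simp)
    have h2 : (2 : ℂ) ∈ L := ofNat_mem L 2
    have ha : (a : ℂ) ∈ L := by
      have := div_mem (add_mem hz hz') h2
      rwa [show ((a : ℂ) + b * Complex.I + (a - b * Complex.I)) / 2 = a by ring] at this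
    have hbI : (b : ℂ) * Complex.I ∈ L := by
      have := div_mem (sub_mem hz hz') h2
      rwa [show ((a : ℂ) + b * Complex.I - (a - b * Complex.I)) / 2 = b * Complex.I by ring] at this
    have hb2 : (b : ℂ) ^ 2 ∈ L := by
      have := neg_mem (pow_mem hbI 2)
      rwa [mul_pow, Complex.I_sq, mul_neg_one, neg_neg] at this
    -- `K ⊆ L` is checked on generators, after pulling `L` back along `ℝ → ℂ`.
    have hKL : IntermediateField.adjoin ℚ ({a, b ^ 2} : Set ℝ) ≤
        L.comap (Complex.ofRealAm.restrictScalars ℚ) := by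
      rw [IntermediateField.adjoin_le_iff]
      rintro x (rfl | rfl)
      · exact ha
      · change ((b ^ 2 : ℝ) : ℂ) ∈ L
        rwa [Complex.ofReal_pow]
    have hbL : (b : ℂ) ∈ L := hKL h
    have := div_mem hbI hbL
    rwa [mul_div_cancel_left₀ _ (Complex.ofReal_ne_zero.mpr hb)] at this
end

section
/- Let z = a+bi with a, b real and b ≠ 0, and let K = ℚ(z, z̄) be the subfield of ℂ generated over ℚ by z and its complex conjugate. Then: (i) K ∩ ℝ equals the subfield ℚ(a, b²) of ℝ; (ii) K is generated over K ∩ ℝ by the single element bi, and [K : K ∩ ℝ] = 2; (iii) K ∩ ℝ equals ℚ(a, b) if and only if b ∈ ℚ(a, b²). -/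
/-!
Write `F = ℚ(a, b²) ⊆ ℝ`. Every element of `K = ℚ(z, z̄)` has the form `u + v · b i` with
`u, v ∈ F`: since `b² ∈ F`, this says that `Re w ∈ F` and `b · Im w ∈ F`, and these two conditions
define a subfield of `ℂ` (`thalianField`) containing `z` and `z̄`. Conversely `a = (z + z̄) / 2`,
`b i = (z - z̄) / 2` and `b² = -(b i)²` lie in `K`, so the image of `F` in `ℂ` lies in `K`. Hence
`K ∩ ℝ = F`, and `K = F(b i)`. The degree is `2` because `b i` is not real and is a root of
`X² + b²`. Finally `F = ℚ(a, b)` holds exactly when `b ∈ F`.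
-/

/-- The subfield `F + F · b i` of `ℂ`, for a subfield `F` of `ℝ` containing `b²`. Membership of the
`b i`-coordinate in `F` is encoded as `w.im * b ∈ F`, which is equivalent as `b² ∈ F` and
`b ≠ 0`. -/
def thalianField (F : IntermediateField ℚ ℝ) (b : ℝ) (hb : b ≠ 0) (hF : b ^ 2 ∈ F) :
    IntermediateField ℚ ℂ where
  carrier := {w | w.re ∈ F ∧ w.im * b ∈ F}
  mul_mem' := by
    rintro x y ⟨hx, hx'⟩ ⟨hy, hy'⟩
    constructor
    · have h : (x * y).re = x.re * y.re - (x.im * b) * (y.im * b) / b ^ 2 := by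
        rw [Complex.mul_re]; field_simp
      rw [h]
      exact sub_mem (mul_mem hx hy) (div_mem (mul_mem hx' hy') hF)
    · have h : (x * y).im * b = x.re * (y.im * b) + (x.im * b) * y.re := by
        rw [Complex.mul_im]; ring
      rw [h]
      exact add_mem (mul_mem hx hy') (mul_mem hx' hy)
  add_mem' := by
    rintro x y ⟨hx, hx'⟩ ⟨hy, hy'⟩
    refine ⟨add_mem hx hy, ?_⟩
    rw [Complex.add_im, add_mul]
    exact add_mem hx' hy'
  algebraMap_mem' := by
    intro r
    simp
  inv_mem' := by
    rintro x ⟨hx, hx'⟩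
    have hn : Complex.normSq x ∈ F := by
      have h : Complex.normSq x = x.re * x.re + (x.im * b) * (x.im * b) / b ^ 2 := by
        rw [Complex.normSq_apply]; field_simp
      rw [h]
      exact add_mem (mul_mem hx hx) (div_mem (mul_mem hx' hx') hF)
    constructor
    · rw [Complex.inv_re]
      exact div_mem hx hn
    · have h : (x⁻¹).im * b = -(x.im * b) / Complex.normSq x := by
        rw [Complex.inv_im]; ring
      rw [h]
      exact div_mem (neg_mem hx') hn

theorem mem_thalianField {F : IntermediateField ℚ ℝ} {b : ℝ} {hb : b ≠ 0} {hF : b ^ 2 ∈ F}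
    {w : ℂ} : w ∈ thalianField F b hb hF ↔ w.re ∈ F ∧ w.im * b ∈ F := Iff.rfl

/-- Theorem 2.11 of the paper.  For `z = a + b i` with `b ≠ 0` and
`K = ℚ(z, z̄)`:
(i) the real elements of `K` are exactly `ℚ(a, b²)`;
(ii) `K` is generated over its real subfield `Kr = K ∩ ℝ` by `b i`, and
`[K : Kr] = 2`;
(iii) `K ∩ ℝ = ℚ(a, b)` iff `b ∈ ℚ(a, b²)`. -/
theorem thalian_field_structure (a b : ℝ) (hb : b ≠ 0)
    (K : IntermediateField ℚ ℂ)
    (hK : K = IntermediateField.adjoin ℚ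
      ({(a : ℂ) + (b : ℂ) * Complex.I, (a : ℂ) - (b : ℂ) * Complex.I} : Set ℂ)) :
    (∀ x : ℝ, (x : ℂ) ∈ K ↔ x ∈ IntermediateField.adjoin ℚ ({a, b ^ 2} : Set ℝ)) ∧
    ∃ (Kr : IntermediateField ℚ ℂ) (hle : Kr ≤ K),
      (∀ w : ℂ, w ∈ Kr ↔ w ∈ K ∧ ∃ x : ℝ, w = (x : ℂ)) ∧
      IntermediateField.extendScalars hle =
        IntermediateField.adjoin Kr ({(b : ℂ) * Complex.I} : Set ℂ) ∧
      Module.finrank Kr (IntermediateField.extendScalars hle) = 2 ∧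
      ((∀ x : ℝ, (x : ℂ) ∈ Kr ↔ x ∈ IntermediateField.adjoin ℚ ({a, b} : Set ℝ)) ↔
        b ∈ IntermediateField.adjoin ℚ ({a, b ^ 2} : Set ℝ)) := by
  set F := IntermediateField.adjoin ℚ ({a, b ^ 2} : Set ℝ) with hFdef
  have haF : a ∈ F := IntermediateField.subset_adjoin _ _ (by simp)
  have hbF : b ^ 2 ∈ F := IntermediateField.subset_adjoin _ _ (by simp)
  have hz : (a : ℂ) + (b : ℂ) * Complex.I ∈ K := by
    rw [hK]; exact IntermediateField.subset_adjoin _ _ (by simp)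
  have hz' : (a : ℂ) - (b : ℂ) * Complex.I ∈ K := by
    rw [hK]; exact IntermediateField.subset_adjoin _ _ (by simp)
  have h2 : (2 : ℂ) ∈ K := ofNat_mem K 2
  have haK : (a : ℂ) ∈ K := by
    convert div_mem (add_mem hz hz') h2 using 1; ring
  have hbK : (b : ℂ) * Complex.I ∈ K := by
    convert div_mem (sub_mem hz hz') h2 using 1; ring
  have hb2K : ((b ^ 2 : ℝ) : ℂ) ∈ K := by
    convert neg_mem (pow_mem hbK 2) using 1
    rw [mul_pow, Complex.I_sq]; push_cast; ring
  let φ : ℝ →ₐ[ℚ] ℂ := Complex.ofRealAm.restrictScalars ℚ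
  have hFK : F ≤ K.comap φ := by
    rw [hFdef, IntermediateField.adjoin_le_iff]
    rintro x (rfl | rfl)
    · exact haK
    · exact hb2K
  have hKF : K ≤ thalianField F b hb hbF := by
    rw [hK, IntermediateField.adjoin_le_iff]
    rintro x (rfl | rfl)
    · refine mem_thalianField.2 ⟨by simpa using haF, by simpa [sq] using hbF⟩
    · refine mem_thalianField.2 ⟨by simpa using haF, by simpa [sq] using hbF⟩
  have hreal (x : ℝ) : (x : ℂ) ∈ K ↔ x ∈ F := ⟨fun h => (hKF h).1, fun h => hFK h⟩
  have hmem (w : ℂ) : w ∈ F.map φ ↔ w ∈ K ∧ ∃ x : ℝ, w = (x : ℂ) := by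
    rw [IntermediateField.mem_map]
    constructor
    · rintro ⟨x, hx, rfl⟩
      exact ⟨hFK hx, x, rfl⟩
    · rintro ⟨h, x, rfl⟩
      exact ⟨x, (hreal x).1 h, rfl⟩
  have hle : F.map φ ≤ K := fun w hw => ((hmem w).1 hw).1
  have hmemr (x : ℝ) : (x : ℂ) ∈ F.map φ ↔ x ∈ F := by
    rw [hmem, hreal]
    exact ⟨fun h => h.1, fun h => ⟨h, x, rfl⟩⟩
  have hext : IntermediateField.extendScalars hle =
      IntermediateField.adjoin (F.map φ) ({(b : ℂ) * Complex.I} : Set ℂ) := by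
    apply le_antisymm
    · intro w hw
      obtain ⟨hre, him⟩ := hKF ((IntermediateField.mem_extendScalars hle).1 hw)
      -- The `b i`-coordinate of `w` is `Im w / b`, which lies in `F` as `b · Im w / b²`.
      obtain ⟨v, hv, hvb⟩ : ∃ v ∈ F, w.im = v * b :=
        ⟨w.im * b / b ^ 2, div_mem him hbF, by field_simp⟩
      have hw' : w = (w.re : ℂ) + (v : ℂ) * ((b : ℂ) * Complex.I) := by
        apply Complex.ext
        · simp
        · simp [hvb]
      rw [hw']
      refine add_mem ?_ (mul_mem ?_ (IntermediateField.mem_adjoin_simple_self _ _))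
      · exact IntermediateField.algebraMap_mem _ (⟨_, (hmemr _).2 hre⟩ : F.map φ)
      · exact IntermediateField.algebraMap_mem _ (⟨_, (hmemr _).2 hv⟩ : F.map φ)
    · rw [IntermediateField.adjoin_le_iff]
      rintro x rfl
      exact hbK
  refine ⟨hreal, F.map φ, hle, hmem, hext, ?_, ?_⟩
  · let c : F.map φ := ⟨((b ^ 2 : ℝ) : ℂ), (hmemr _).2 hbF⟩
    have hmonic : (Polynomial.X ^ 2 + Polynomial.C c).Monic :=
      Polynomial.monic_X_pow_add_C c two_ne_zero
    have hroot : Polynomial.aeval ((b : ℂ) * Complex.I) (Polynomial.X ^ 2 + Polynomial.C c) = 0 := by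
      have hc : algebraMap (F.map φ) ℂ c = (b : ℂ) ^ 2 := by
        change ((b ^ 2 : ℝ) : ℂ) = _
        push_cast; rfl
      simp [hc, mul_pow]
    have hint : IsIntegral (F.map φ) ((b : ℂ) * Complex.I) := ⟨_, hmonic, hroot⟩
    rw [hext, IntermediateField.adjoin.finrank hint]
    apply le_antisymm
    · refine (Polynomial.natDegree_le_of_dvd (minpoly.dvd _ _ hroot) hmonic.ne_zero).trans ?_
      rw [Polynomial.natDegree_X_pow_add_C]
    · rw [minpoly.two_le_natDegree_iff hint]
      rintro ⟨y, hy⟩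
      obtain ⟨-, x, hx⟩ := (hmem y).1 y.2
      have hbx : (x : ℂ) = (b : ℂ) * Complex.I := hx.symm.trans hy
      have := congrArg Complex.im hbx
      simp at this
      exact hb this.symm
  · constructor
    · intro h
      rw [← hmemr, h]
      exact IntermediateField.subset_adjoin _ _ (by simp)
    · intro h x
      have hab : F = IntermediateField.adjoin ℚ ({a, b} : Set ℝ) := by
        apply le_antisymm
        · rw [hFdef, IntermediateField.adjoin_le_iff]
          rintro x (rfl | rfl)
          · exact IntermediateField.subset_adjoin _ _ (by simp)
          · exact pow_mem (IntermediateField.subset_adjoin _ _ (by simp)) 2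
        · rw [IntermediateField.adjoin_le_iff]
          rintro x (rfl | rfl)
          · exact haF
          · exact h
      rw [hmemr, hab]
end

section
/- Let 𝒫 be the smallest subfield of ℝ that is closed under the operation x ↦ √(1 + x²). Then √(4 + 2√2) belongs to 𝒫, but √(2 + 2√2) does not belong to 𝒫 (even though 2 + 2√2 = (√(4+2√2))² − (√2)² with both √(4+2√2) and √2 in 𝒫). -/
/-!
Membership holds because `4 + 2√2 = 1 + (1 + √2)²` and `√2 = √(1 + 1²)`.

For non-membership, let `K` be the field of real algebraic numbers. The minimal polynomial of `√2`
over `ℚ` is `X² - 2`, so some embedding `σ : K → ℂ` sends `√2` to `-√2`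
(`exists_embedding_sqrt_two_neg`). The elements of `K` whose image under `σ` is real form a subfield
of `ℝ`, and it is closed under `x ↦ √(1 + x²)`: if `σ x` is real, then `σ √(1 + x²)` squares to the
nonnegative real `1 + (σ x)²`, hence is real. So it contains the Pythagorean field. But
`σ √(2 + 2√2)` squares to `2 - 2√2 < 0`, hence is not real.
-/

/-- The field of real Pythagorean numbers: the smallest subfield of `ℝ` closed
under `x ↦ √(1 + x²)`. -/
noncomputable def pythagoreanField : Subfield ℝ :=
  sInf {F : Subfield ℝ | ∀ x ∈ F, Real.sqrt (1 + x ^ 2) ∈ F}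

open Polynomial in
lemma minpoly_rat_of_sq_eq_two {K : Type*} [Field K] [Algebra ℚ K] {s : K} (hs : s ^ 2 = 2) :
    minpoly ℚ s = X ^ 2 - C 2 := by
  symm
  apply minpoly.eq_of_irreducible_of_monic
  · apply X_pow_sub_C_irreducible_of_prime Nat.prime_two
    intro b hb
    have hb' : (b : ℝ) ^ 2 = 2 := by exact_mod_cast hb
    refine irrational_sqrt_two ⟨|b|, ?_⟩
    rw [← hb', Real.sqrt_sq_eq_abs, Rat.cast_abs]
  · simp [hs]
  · exact monic_X_pow_sub_C 2 two_ne_zero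

/-- An algebraic extension of `ℚ` containing a square root `s` of `2` has a complex embedding
sending `s` to the negative square root of `2`. -/
lemma exists_embedding_sqrt_two_neg {K : Type*} [Field K] [Algebra ℚ K] [Algebra.IsAlgebraic ℚ K]
    {s : K} (hs : s ^ 2 = 2) : ∃ σ : K →ₐ[ℚ] ℂ, σ s = ((-√2 : ℝ) : ℂ) := by
  apply IntermediateField.exists_algHom_of_splits_of_aeval
  · exact fun t => ⟨Algebra.IsIntegral.isIntegral t, IsAlgClosed.splits _⟩
  · rw [minpoly_rat_of_sq_eq_two hs]
    have h : ((√2 : ℝ) : ℂ) ^ 2 = 2 := by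
      exact_mod_cast Real.sq_sqrt (zero_le_two : (0 : ℝ) ≤ 2)
    simp [h]

lemma exists_ofReal_eq_of_sq_eq {z : ℂ} {r : ℝ} (hr : 0 ≤ r) (hz : z ^ 2 = r) :
    ∃ t : ℝ, (t : ℂ) = z := by
  have h : z ^ 2 = ((√r : ℝ) : ℂ) ^ 2 := by
    rw [hz]
    exact_mod_cast (Real.sq_sqrt hr).symm
  rcases sq_eq_sq_iff_eq_or_eq_neg.1 h with h | h
  · exact ⟨√r, h.symm⟩
  · exact ⟨-√r, by simp [h]⟩

lemma sqrt_mem_algebraicClosure {x : ℝ} (hx : x ∈ algebraicClosure ℚ ℝ) :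
    √x ∈ algebraicClosure ℚ ℝ := by
  rw [mem_algebraicClosure_iff] at hx ⊢
  rcases le_total 0 x with h | h
  · refine IsAlgebraic.of_pow (n := 2) two_pos ?_
    rwa [Real.sq_sqrt h]
  · rw [Real.sqrt_eq_zero_of_nonpos h]
    exact isAlgebraic_zero

/-- The real algebraic numbers whose image under the embedding `σ` is real. -/
noncomputable def realUnder (σ : algebraicClosure ℚ ℝ →ₐ[ℚ] ℂ) : Subfield ℝ :=
  (Complex.ofRealHom.fieldRange.comap σ.toRingHom).map (algebraMap (algebraicClosure ℚ ℝ) ℝ)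

lemma mem_realUnder {σ : algebraicClosure ℚ ℝ →ₐ[ℚ] ℂ} {x : ℝ} :
    x ∈ realUnder σ ↔ ∃ y : algebraicClosure ℚ ℝ, (∃ t : ℝ, (t : ℂ) = σ y) ∧ (y : ℝ) = x :=
  Iff.rfl

lemma pythagoreanField_le_realUnder (σ : algebraicClosure ℚ ℝ →ₐ[ℚ] ℂ) :
    pythagoreanField ≤ realUnder σ := by
  refine sInf_le fun x hx => ?_
  obtain ⟨y, ⟨t, ht⟩, rfl⟩ := mem_realUnder.1 hx
  let w : algebraicClosure ℚ ℝ :=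
    ⟨√(1 + (y : ℝ) ^ 2), sqrt_mem_algebraicClosure (1 + y ^ 2).2⟩
  have hw : w ^ 2 = 1 + y ^ 2 := Subtype.ext (Real.sq_sqrt (by positivity))
  refine mem_realUnder.2 ⟨w, exists_ofReal_eq_of_sq_eq (r := 1 + t ^ 2) (by positivity) ?_, rfl⟩
  rw [← map_pow, hw]
  simp [ht]

/-- The number `√(4 + 2√2)` is Pythagorean because
`4 + 2√2 = 1 + (1 + √(1 + 1²))²`. -/
lemma sqrt_four_add_mem : √(4 + 2 * √2) ∈ pythagoreanField := by
  refine Subfield.mem_sInf.2 fun F hF => ?_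
  have h2 : √2 ∈ F := by
    have := hF 1 F.one_mem
    norm_num at this
    exact this
  have h := hF _ (F.add_mem F.one_mem h2)
  have e : 1 + (1 + √2) ^ 2 = 4 + 2 * √2 := by
    linear_combination Real.sq_sqrt (zero_le_two : (0 : ℝ) ≤ 2)
  rwa [e] at h

lemma sqrt_two_add_not_mem : √(2 + 2 * √2) ∉ pythagoreanField := by
  intro hmem
  let s : algebraicClosure ℚ ℝ :=
    ⟨√2, sqrt_mem_algebraicClosure (2 : algebraicClosure ℚ ℝ).2⟩
  have hs : s ^ 2 = 2 := Subtype.ext (Real.sq_sqrt zero_le_two)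
  have : Algebra.IsAlgebraic ℚ (algebraicClosure ℚ ℝ) := algebraicClosure.isAlgebraic ℚ ℝ
  obtain ⟨σ, hσ⟩ := exists_embedding_sqrt_two_neg hs
  obtain ⟨y, ⟨t, ht⟩, hy⟩ := mem_realUnder.1 (pythagoreanField_le_realUnder σ hmem)
  have hy2 : y ^ 2 = 2 + 2 * s := by
    apply Subtype.ext
    change (y : ℝ) ^ 2 = 2 + 2 * √2
    rw [hy, Real.sq_sqrt (by positivity)]
  have h := congrArg σ hy2
  simp only [map_pow, map_add, map_mul, map_ofNat, hσ, ← ht] at h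
  have h' : t ^ 2 = 2 + 2 * -√2 := by exact_mod_cast h
  have h1 : 1 < √2 := Real.one_lt_sqrt_two
  nlinarith [sq_nonneg t]

/-- The paper's example at the end of Section 3: `√(4 + 2√2)` is Pythagorean but
`√(2 + 2√2)` is not. -/
theorem pythagorean_example :
    Real.sqrt (4 + 2 * Real.sqrt 2) ∈ pythagoreanField ∧
    Real.sqrt (2 + 2 * Real.sqrt 2) ∉ pythagoreanField := by
  exact ⟨sqrt_four_add_mem, sqrt_two_add_not_mem⟩
end

section
/- Let ℰ be the smallest subfield of ℂ closed under taking square roots (i.e., the intersection of all subfields E of ℂ such that every w ∈ ℂ with w² ∈ E satisfies w ∈ E), and let F be the smallest subfield of ℝ closed under taking square roots of its positive elements (i.e., such that every x ∈ F with x > 0 has √x ∈ F). Then ℰ = {x + y·i : x, y ∈ F}; in particular ℰ is closed under complex conjugation and ℰ ∩ ℝ = F. -/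
/-!
Let `F` be the real Euclidean field. The set `F + iF` is a subfield of `ℂ`, and it is closed under
square roots: if `(a + bi)² = u + vi` with `u, v ∈ F`, then `a² + b² = √(u² + v²)` lies in `F`,
hence so do `a² = (√(u² + v²) + u) / 2` and `b² = (√(u² + v²) - u) / 2`, and hence `a` and `b`.
So `ℰ ⊆ F + iF`. Conversely `ℰ` contains `i`, and `ℰ ∩ ℝ` is a subfield of `ℝ` closed under
square roots of positive elements, so it contains `F`.
-/


/-- The field of Euclidean constructible numbers: the smallest subfield of `ℂ`
closed under taking square roots. -/
noncomputable def euclideanField : Subfield ℂ :=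
  sInf {E : Subfield ℂ | ∀ w : ℂ, w ^ 2 ∈ E → w ∈ E}

/-- The smallest subfield of `ℝ` closed under taking square roots of its
positive elements. -/
noncomputable def realEuclideanField : Subfield ℝ :=
  sInf {F : Subfield ℝ | ∀ x ∈ F, 0 < x → Real.sqrt x ∈ F}

lemma sqrt_mem_realEuclideanField {x : ℝ} (hx : x ∈ realEuclideanField) :
    √x ∈ realEuclideanField := by
  rcases le_or_gt x 0 with h | h
  · rw [Real.sqrt_eq_zero_of_nonpos h]
    exact zero_mem _
  · refine Subfield.mem_sInf.2 fun F hF => hF x (Subfield.mem_sInf.1 hx F hF) h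

lemma mem_realEuclideanField_of_sq_mem {a : ℝ} (h : a ^ 2 ∈ realEuclideanField) :
    a ∈ realEuclideanField := by
  have h' := sqrt_mem_realEuclideanField h
  rw [Real.sqrt_sq_eq_abs] at h'
  rcases abs_choice a with e | e
  · rwa [e] at h'
  · rw [e] at h'
    exact neg_mem_iff.1 h'

lemma mem_euclideanField_of_sq_mem {w : ℂ} (h : w ^ 2 ∈ euclideanField) :
    w ∈ euclideanField :=
  Subfield.mem_sInf.2 fun E hE => hE w (Subfield.mem_sInf.1 h E hE)

/-- The subfield `F + iF` of `ℂ`, where `F` is the real Euclidean field. -/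
noncomputable def reImSubfield : Subfield ℂ where
  carrier := {z | z.re ∈ realEuclideanField ∧ z.im ∈ realEuclideanField}
  zero_mem' := ⟨zero_mem _, zero_mem _⟩
  one_mem' := ⟨one_mem _, zero_mem _⟩
  add_mem' hz hw := ⟨add_mem hz.1 hw.1, add_mem hz.2 hw.2⟩
  neg_mem' hz := ⟨neg_mem hz.1, neg_mem hz.2⟩
  mul_mem' {z w} hz hw := by
    refine ⟨?_, ?_⟩
    · rw [Complex.mul_re]
      exact sub_mem (mul_mem hz.1 hw.1) (mul_mem hz.2 hw.2)
    · rw [Complex.mul_im]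
      exact add_mem (mul_mem hz.1 hw.2) (mul_mem hz.2 hw.1)
  inv_mem' z hz := by
    have hn : Complex.normSq z ∈ realEuclideanField := by
      rw [Complex.normSq_apply]
      exact add_mem (mul_mem hz.1 hz.1) (mul_mem hz.2 hz.2)
    refine ⟨?_, ?_⟩
    · rw [Complex.inv_re]
      exact div_mem hz.1 hn
    · rw [Complex.inv_im]
      exact div_mem (neg_mem hz.2) hn

lemma mem_reImSubfield_of_sq_mem {w : ℂ} (h : w ^ 2 ∈ reImSubfield) : w ∈ reImSubfield := by
  obtain ⟨hu, hv⟩ : (w ^ 2).re ∈ realEuclideanField ∧ (w ^ 2).im ∈ realEuclideanField := h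
  have hre : (w ^ 2).re = w.re ^ 2 - w.im ^ 2 := by
    rw [pow_two, Complex.mul_re]
    ring
  have him : (w ^ 2).im = 2 * w.re * w.im := by
    rw [pow_two, Complex.mul_im]
    ring
  rw [hre] at hu
  rw [him] at hv
  have hn : w.re ^ 2 + w.im ^ 2 ∈ realEuclideanField := by
    have hs := sqrt_mem_realEuclideanField (add_mem (pow_mem hu 2) (pow_mem hv 2))
    rwa [show (w.re ^ 2 - w.im ^ 2) ^ 2 + (2 * w.re * w.im) ^ 2 = (w.re ^ 2 + w.im ^ 2) ^ 2 by ring,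
      Real.sqrt_sq (by positivity)] at hs
  have h2 : (2 : ℝ) ∈ realEuclideanField := ofNat_mem _ 2
  refine ⟨mem_realEuclideanField_of_sq_mem ?_, mem_realEuclideanField_of_sq_mem ?_⟩
  · convert div_mem (add_mem hn hu) h2 using 1
    ring
  · convert div_mem (sub_mem hn hu) h2 using 1
    ring

lemma ofReal_mem_euclideanField {x : ℝ} (hx : x ∈ realEuclideanField) :
    (x : ℂ) ∈ euclideanField := by
  refine Subfield.mem_sInf.1 hx (euclideanField.comap Complex.ofRealHom) fun y hy hpos => ?_
  refine mem_euclideanField_of_sq_mem (w := ((√y : ℝ) : ℂ)) ?_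
  rw [← Complex.ofReal_pow, Real.sq_sqrt hpos.le]
  exact hy

lemma mem_euclideanField_iff (z : ℂ) : z ∈ euclideanField ↔
    z.re ∈ realEuclideanField ∧ z.im ∈ realEuclideanField := by
  refine ⟨fun h => Subfield.mem_sInf.1 h reImSubfield fun _ => mem_reImSubfield_of_sq_mem,
    fun h => ?_⟩
  have hI : Complex.I ∈ euclideanField := by
    refine mem_euclideanField_of_sq_mem ?_
    rw [Complex.I_sq]
    exact neg_mem (one_mem _)
  rw [← Complex.re_add_im z]
  exact add_mem (ofReal_mem_euclideanField h.1) (mul_mem (ofReal_mem_euclideanField h.2) hI)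

/-- Theorem 4.1 and the remark following it: `ℰ = F ⊕ iF`, so in particular `ℰ`
is closed under complex conjugation and `ℰ ∩ ℝ = F`. -/
theorem euclidean_field_eq_re_im :
    (∀ z : ℂ, z ∈ euclideanField ↔
      z.re ∈ realEuclideanField ∧ z.im ∈ realEuclideanField) ∧
    (∀ z ∈ euclideanField, (starRingEnd ℂ) z ∈ euclideanField) ∧
    (∀ x : ℝ, (x : ℂ) ∈ euclideanField ↔ x ∈ realEuclideanField) := by
  refine ⟨mem_euclideanField_iff, fun z hz => ?_, fun x => ?_⟩
  · rw [mem_euclideanField_iff] at hz ⊢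
    exact ⟨hz.1, neg_mem hz.2⟩
  · exact ⟨fun h => ((mem_euclideanField_iff _).1 h).1, ofReal_mem_euclideanField⟩
end

section
/- Let a, b, μ be real numbers with b ≠ 0 and μ ≠ 0. The line L = {(x, μx − μ²/2) : x ∈ ℝ} in ℝ² meets the parabola {(x, y) : y = x²/2} in exactly one point; and L meets the parabola {(x, y) : (y − a/2)² = 2bx} in exactly one point if and only if μ³ + aμ + b = 0. -/
/-! Substituting the line into the second parabola gives, with `c = (μ² + a)/2`, the quadratic
`μ²x² − 2(μc + b)x + c² = 0`, whose quarter discriminant is `b (μ³ + aμ + b)`. As `μ ≠ 0` and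
`b ≠ 0`, it has exactly one root iff the cubic vanishes. For the forward direction, a unique root
must equal its conjugate, hence `(μc + b)/μ²`, which forces the discriminant to vanish. -/

/-- Section 5 of the paper: the line `y = μx − μ²/2` of slope `μ ≠ 0` is tangent
to the parabola `y = x²/2` (meets it in exactly one point), and it meets the
parabola `(y − a/2)² = 2bx` (with `b ≠ 0`) in exactly one point if and only if
`μ³ + aμ + b = 0`. -/
theorem tangent_line_two_parabolas (a b μ : ℝ) (hb : b ≠ 0) (hμ : μ ≠ 0) :
    (∃! p : ℝ × ℝ, p.2 = μ * p.1 - μ ^ 2 / 2 ∧ p.2 = p.1 ^ 2 / 2) ∧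
    ((∃! p : ℝ × ℝ, p.2 = μ * p.1 - μ ^ 2 / 2 ∧ (p.2 - a / 2) ^ 2 = 2 * b * p.1) ↔
      μ ^ 3 + a * μ + b = 0) := by
  refine ⟨⟨(μ, μ ^ 2 / 2), ⟨by ring, rfl⟩, ?_⟩, ?_, ?_⟩
  · rintro ⟨x, y⟩ ⟨h1, h2⟩
    dsimp only at h1 h2
    have h : (x - μ) ^ 2 = 0 := by linear_combination 2 * h1 - 2 * h2
    have hx : x = μ := sub_eq_zero.mp (pow_eq_zero_iff two_ne_zero |>.mp h)
    subst hx
    rw [h2]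
  · rintro ⟨⟨x, y⟩, ⟨h1, h2⟩, huniq⟩
    dsimp only at h1 h2
    subst h1
    -- The conjugate root, from the sum of the roots `(μ³ + aμ + 2b)/μ²`.
    obtain ⟨z, hz⟩ : ∃ z, μ ^ 2 * z = μ ^ 3 + a * μ + 2 * b - μ ^ 2 * x :=
      ⟨(μ ^ 3 + a * μ + 2 * b - μ ^ 2 * x) / μ ^ 2, by field_simp⟩
    have hzx : z = x := by
      refine congrArg Prod.fst (huniq (z, μ * z - μ ^ 2 / 2) ⟨rfl, ?_⟩)
      dsimp only
      linear_combination h2 + (z - x) * hz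
    subst hzx
    have h : b * (μ ^ 3 + a * μ + b) = 0 := by
      linear_combination (-μ ^ 2) * h2 +
        (μ ^ 2 * z - (μ ^ 3 + a * μ + 2 * b) / 2) / 2 * hz
    exact (mul_eq_zero.mp h).resolve_left hb
  · intro h
    -- The double root is `b / (2μ²)`.
    obtain ⟨x, hx⟩ : ∃ x, 2 * μ ^ 2 * x = b := ⟨b / (2 * μ ^ 2), by field_simp⟩
    have hsq (t : ℝ) :
        (μ * t - μ ^ 2 / 2 - a / 2) ^ 2 - 2 * b * t = (μ * (t - x)) ^ 2 := by
      have ha : a = -μ ^ 2 - 2 * μ * x := by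
        apply mul_left_cancel₀ hμ
        linear_combination h + hx
      rw [ha, ← hx]
      ring
    refine ⟨(x, μ * x - μ ^ 2 / 2), ⟨rfl, ?_⟩, ?_⟩
    · dsimp only
      linear_combination hsq x
    · rintro ⟨t, y⟩ ⟨h1, h2⟩
      dsimp only at h1 h2
      subst h1
      have h0 : (μ * (t - x)) ^ 2 = 0 := by linear_combination h2 - hsq t
      have ht : t = x := sub_eq_zero.mp
        ((mul_eq_zero.mp (pow_eq_zero_iff two_ne_zero |>.mp h0)).resolve_left hμ)
      rw [ht]
end

section
/- Let 𝒪 be the smallest subfield of ℂ that is closed under complex conjugation, closed under taking square roots (every w ∈ ℂ with w² ∈ 𝒪 lies in 𝒪), and closed under taking cube roots (every w ∈ ℂ with w³ ∈ 𝒪 lies in 𝒪). Then for every polynomial p ∈ ℂ[X] with p ≠ 0, deg p ≤ 4, and all coefficients of p in 𝒪, every complex root of p belongs to 𝒪. -/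
/-!
Only closure under square roots and cube roots is used; both properties pass from the members of
the defining family of subfields to their intersection.  Let `F` be any subfield of `ℂ` with these
two properties.

* Quadratics: complete the square (`root_mem_of_quadratic`).
* Cubics: after a shift the equation is `y³ + py + q = 0`.  Write `y = u + v` with `uv = -p/3`; then
  `u³` and `v³` are both roots of `t² + qt - p³/27`, so `u, v ∈ F` (Cardano,
  `root_mem_of_depressed_cubic`).
* Quartics: after a shift the equation is `y⁴ + py² + qy + r = 0`.  A root `m` of the resolvent
  cubic lies in `F` and turns the equation into `(y² + p/2 + m)² = (sy - t)²` with `s, t ∈ F`, so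
  `y` is a root of a quadratic over `F` (Ferrari, `root_mem_of_depressed_quartic`).

A polynomial of degree `1 ≤ n < 4` is reduced to a quartic by multiplying it by `X ^ (4 - n)`.
-/

/-- The field of origami (conic-constructible) numbers: the smallest subfield of
`ℂ` closed under complex conjugation, square roots and cube roots. -/
noncomputable def origamiField : Subfield ℂ :=
  sInf {F : Subfield ℂ |
    (∀ z ∈ F, (starRingEnd ℂ) z ∈ F) ∧
    (∀ w : ℂ, w ^ 2 ∈ F → w ∈ F) ∧
    (∀ w : ℂ, w ^ 3 ∈ F → w ∈ F)}

section Roots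

variable {F : Subfield ℂ}

theorem root_mem_of_quadratic (h2 : ∀ w : ℂ, w ^ 2 ∈ F → w ∈ F) {b c x : ℂ}
    (hb : b ∈ F) (hc : c ∈ F) (h : x ^ 2 + b * x + c = 0) : x ∈ F := by
  have hw : 2 * x + b ∈ F := by
    apply h2
    have e : (2 * x + b) ^ 2 = b ^ 2 - 4 * c := by linear_combination 4 * h
    rw [e]
    exact sub_mem (pow_mem hb 2) (mul_mem (ofNat_mem F 4) hc)
  have e : x = (2 * x + b - b) / 2 := by ring
  rw [e]
  exact div_mem (sub_mem hw hb) (ofNat_mem F 2)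

theorem root_mem_of_depressed_cubic (h2 : ∀ w : ℂ, w ^ 2 ∈ F → w ∈ F)
    (h3 : ∀ w : ℂ, w ^ 3 ∈ F → w ∈ F) {p q y : ℂ}
    (hp : p ∈ F) (hq : q ∈ F) (h : y ^ 3 + p * y + q = 0) : y ∈ F := by
  -- `u` is a root of `u² - yu - p/3`, the other root being `v = y - u`.
  obtain ⟨s, hs⟩ := IsAlgClosed.exists_pow_nat_eq (y ^ 2 + 4 * p / 3) (n := 2) two_pos
  have key : ∀ u : ℂ, u ^ 2 - y * u - p / 3 = 0 → u ∈ F := by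
    intro u hu
    apply h3
    have hc : -(p ^ 3 / 27) ∈ F := neg_mem (div_mem (pow_mem hp 3) (ofNat_mem F 27))
    refine root_mem_of_quadratic h2 hq hc ?_
    -- With `v = y - u`, one has `u³v³ = -p³/27` and `u³ + v³ = y³ - 3uvy = -q`.
    have e1 : u * (y - u) = -(p / 3) := by linear_combination -hu
    have e2 : u ^ 3 + (y - u) ^ 3 = -q := by linear_combination h - 3 * y * e1
    have e3 : u ^ 3 * (y - u) ^ 3 = -(p ^ 3 / 27) := by
      rw [← mul_pow, e1]; ring
    linear_combination u ^ 3 * e2 - e3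
  have hu : (y + s) / 2 ∈ F := key _ (by linear_combination hs / 4)
  have hv : (y - s) / 2 ∈ F := key _ (by linear_combination hs / 4)
  have e : y = (y + s) / 2 + (y - s) / 2 := by ring
  rw [e]
  exact add_mem hu hv

theorem root_mem_of_cubic (h2 : ∀ w : ℂ, w ^ 2 ∈ F → w ∈ F)
    (h3 : ∀ w : ℂ, w ^ 3 ∈ F → w ∈ F) {b c d x : ℂ}
    (hb : b ∈ F) (hc : c ∈ F) (hd : d ∈ F)
    (h : x ^ 3 + b * x ^ 2 + c * x + d = 0) : x ∈ F := by
  have hb3 : b / 3 ∈ F := div_mem hb (ofNat_mem F 3)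
  have hp : c - 3 * (b / 3) ^ 2 ∈ F :=
    sub_mem hc (mul_mem (ofNat_mem F 3) (pow_mem hb3 2))
  have hq : 2 * (b / 3) ^ 3 - (b / 3) * c + d ∈ F :=
    add_mem (sub_mem (mul_mem (ofNat_mem F 2) (pow_mem hb3 3)) (mul_mem hb3 hc)) hd
  have hy : x + b / 3 ∈ F :=
    root_mem_of_depressed_cubic h2 h3 hp hq (by linear_combination h)
  simpa using sub_mem hy hb3

open Polynomial in
theorem exists_root_cubic (b c d : ℂ) : ∃ m : ℂ, m ^ 3 + b * m ^ 2 + c * m + d = 0 := by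
  have hdeg : (C 1 * X ^ 3 + C b * X ^ 2 + C c * X + C d : ℂ[X]).degree = 3 :=
    degree_cubic one_ne_zero
  obtain ⟨m, hm⟩ := IsAlgClosed.exists_root
    (C 1 * X ^ 3 + C b * X ^ 2 + C c * X + C d : ℂ[X]) (by rw [hdeg]; decide)
  exact ⟨m, by simpa using hm⟩

theorem root_mem_of_depressed_quartic (h2 : ∀ w : ℂ, w ^ 2 ∈ F → w ∈ F)
    (h3 : ∀ w : ℂ, w ^ 3 ∈ F → w ∈ F) {p q r y : ℂ}
    (hp : p ∈ F) (hq : q ∈ F) (hr : r ∈ F)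
    (h : y ^ 4 + p * y ^ 2 + q * y + r = 0) : y ∈ F := by
  have hp2 : p / 2 ∈ F := div_mem hp (ofNat_mem F 2)
  have hA : (p / 2) ^ 2 - r ∈ F := sub_mem (pow_mem hp2 2) hr
  have hB : -(q ^ 2 / 8) ∈ F := neg_mem (div_mem (pow_mem hq 2) (ofNat_mem F 8))
  obtain ⟨m, hm⟩ := exists_root_cubic p ((p / 2) ^ 2 - r) (-(q ^ 2 / 8))
  have hmF : m ∈ F := root_mem_of_cubic h2 h3 hp hA hB hm
  obtain ⟨s, hs⟩ := IsAlgClosed.exists_pow_nat_eq (2 * m) (n := 2) two_pos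
  have hsF : s ∈ F := h2 s (hs ▸ mul_mem (ofNat_mem F 2) hmF)
  -- The resolvent equation says `q² = (2st)²`; the sign of `t` is chosen so that `q = 2st`,
  -- which also covers `m = 0` since there is no division by `s`.
  obtain ⟨t, ht, hqt⟩ : ∃ t : ℂ, t ^ 2 = m ^ 2 + p * m + ((p / 2) ^ 2 - r) ∧ q = 2 * s * t := by
    obtain ⟨t, ht⟩ :=
      IsAlgClosed.exists_pow_nat_eq (m ^ 2 + p * m + ((p / 2) ^ 2 - r)) (n := 2) two_pos
    have hsq : q ^ 2 = (2 * s * t) ^ 2 := by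
      rw [mul_pow, mul_pow, hs, ht]
      linear_combination -8 * hm
    rcases sq_eq_sq_iff_eq_or_eq_neg.mp hsq with e | e
    · exact ⟨t, ht, e⟩
    · exact ⟨-t, by rw [neg_sq, ht], by rw [e]; ring⟩
  have htF : t ∈ F := h2 t (ht ▸ add_mem (add_mem (pow_mem hmF 2) (mul_mem hp hmF)) hA)
  have hsquares : (y ^ 2 + p / 2 + m) ^ 2 = (s * y - t) ^ 2 := by
    linear_combination h - y ^ 2 * hs - ht - y * hqt
  have hk : p / 2 + m ∈ F := add_mem hp2 hmF
  rcases sq_eq_sq_iff_eq_or_eq_neg.mp hsquares with e | e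
  · exact root_mem_of_quadratic h2 (neg_mem hsF) (add_mem hk htF) (by linear_combination e)
  · exact root_mem_of_quadratic h2 hsF (sub_mem hk htF) (by linear_combination e)

theorem root_mem_of_quartic (h2 : ∀ w : ℂ, w ^ 2 ∈ F → w ∈ F)
    (h3 : ∀ w : ℂ, w ^ 3 ∈ F → w ∈ F) {a b c d e x : ℂ} (ha0 : a ≠ 0)
    (ha : a ∈ F) (hb : b ∈ F) (hc : c ∈ F) (hd : d ∈ F) (he : e ∈ F)
    (h : a * x ^ 4 + b * x ^ 3 + c * x ^ 2 + d * x + e = 0) : x ∈ F := by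
  -- `k` is the shift removing the cubic term.
  obtain ⟨k, hk⟩ : ∃ k : ℂ, k = b / a / 4 := ⟨_, rfl⟩
  have hkF : k ∈ F := hk ▸ div_mem (div_mem hb ha) (ofNat_mem F 4)
  have hcF : c / a ∈ F := div_mem hc ha
  have hdF : d / a ∈ F := div_mem hd ha
  have heF : e / a ∈ F := div_mem he ha
  have hmonic : x ^ 4 + 4 * k * x ^ 3 + c / a * x ^ 2 + d / a * x + e / a = 0 := by
    rw [hk]
    field_simp
    linear_combination h
  have hp : c / a - 6 * k ^ 2 ∈ F := sub_mem hcF (mul_mem (ofNat_mem F 6) (pow_mem hkF 2))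
  have hq : 8 * k ^ 3 - 2 * (c / a * k) + d / a ∈ F :=
    add_mem (sub_mem (mul_mem (ofNat_mem F 8) (pow_mem hkF 3))
      (mul_mem (ofNat_mem F 2) (mul_mem hcF hkF))) hdF
  have hr : c / a * k ^ 2 - 3 * k ^ 4 - d / a * k + e / a ∈ F :=
    add_mem (sub_mem (sub_mem (mul_mem hcF (pow_mem hkF 2))
      (mul_mem (ofNat_mem F 3) (pow_mem hkF 4))) (mul_mem hdF hkF)) heF
  have hy : x + k ∈ F :=
    root_mem_of_depressed_quartic h2 h3 hp hq hr (by linear_combination hmonic)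
  simpa using sub_mem hy hkF

end Roots

theorem origamiField_sqrt_mem (w : ℂ) (hw : w ^ 2 ∈ origamiField) : w ∈ origamiField := by
  rw [origamiField, Subfield.mem_sInf] at *
  exact fun F hF => hF.2.1 w (hw F hF)

theorem origamiField_cbrt_mem (w : ℂ) (hw : w ^ 3 ∈ origamiField) : w ∈ origamiField := by
  rw [origamiField, Subfield.mem_sInf] at *
  exact fun F hF => hF.2.2 w (hw F hF)

/-- Every root of a nonzero polynomial of degree at most `4` with coefficients
in the origami field again lies in the origami field. -/
theorem origami_roots_of_quartic (p : Polynomial ℂ) (hp : p ≠ 0)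
    (hdeg : p.natDegree ≤ 4) (hcoeff : ∀ n : ℕ, p.coeff n ∈ origamiField)
    (z : ℂ) (hz : p.IsRoot z) : z ∈ origamiField := by
  have hsum : p.eval z = 0 := hz
  have h0 : (0 : ℂ) ∈ origamiField := zero_mem _
  have hlead : p.coeff p.natDegree ≠ 0 := by simpa using hp
  have root := @root_mem_of_quartic origamiField origamiField_sqrt_mem origamiField_cbrt_mem
  rw [Polynomial.eval_eq_sum_range] at hsum
  generalize p.natDegree = n at hdeg hlead hsum
  -- In degree `n` the root relation is multiplied by `z ^ (4 - n)`.
  interval_cases n <;> simp only [Finset.sum_range_succ, Finset.sum_range_zero] at hsum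
  · exact absurd (by simpa using hsum) hlead
  · exact root hlead (hcoeff 1) (hcoeff 0) h0 h0 h0 (by linear_combination z ^ 3 * hsum)
  · exact root hlead (hcoeff 2) (hcoeff 1) (hcoeff 0) h0 h0 (by linear_combination z ^ 2 * hsum)
  · exact root hlead (hcoeff 3) (hcoeff 2) (hcoeff 1) (hcoeff 0) h0
      (by linear_combination z * hsum)
  · exact root hlead (hcoeff 4) (hcoeff 3) (hcoeff 2) (hcoeff 1) (hcoeff 0)
      (by linear_combination hsum)
end

section
/- Let 𝒪 be the smallest subfield of ℂ that is closed under complex conjugation, closed under taking square roots, and closed under taking cube roots. Then for every real number θ, if the complex number cos θ belongs to 𝒪, then cos(θ/3) also belongs to 𝒪. -/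
/-- Angle trisection by origami: if `cos θ` is an origami number, so is
`cos (θ/3)`. -/
theorem origami_trisection (θ : ℝ) (h : ((Real.cos θ : ℝ) : ℂ) ∈ origamiField) :
    ((Real.cos (θ / 3) : ℝ) : ℂ) ∈ origamiField := by
  refine Subfield.mem_sInf.2 fun F hF => ?_
  have hc : Complex.cos θ ∈ F := by simpa using Subfield.mem_sInf.1 h F hF
  obtain ⟨-, hsqrt, hcbrt⟩ := hF
  -- `i sin θ` is a square root of `cos² θ - 1`.
  have hs : Complex.sin θ * Complex.I ∈ F := by
    apply hsqrt
    have e : (Complex.sin θ * Complex.I) ^ 2 = Complex.cos θ ^ 2 - 1 := by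
      rw [mul_pow, Complex.I_sq, Complex.sin_sq]
      ring
    rw [e]
    exact sub_mem (pow_mem hc 2) (one_mem F)
  -- Hence `exp (iθ)` lies in `F`, and so does its cube root `exp (iθ/3)`.
  have hw : Complex.exp ((θ / 3 : ℂ) * Complex.I) ∈ F := by
    apply hcbrt
    have e : Complex.exp ((θ / 3 : ℂ) * Complex.I) ^ 3
        = Complex.cos θ + Complex.sin θ * Complex.I := by
      rw [← Complex.exp_nat_mul, ← Complex.exp_mul_I]
      congr 1
      push_cast
      ring
    rw [e]
    exact add_mem hc hs
  -- `cos (θ/3)` is the average of `exp (iθ/3)` and its inverse.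
  have e : ((Real.cos (θ / 3) : ℝ) : ℂ) =
      (Complex.exp ((θ / 3 : ℂ) * Complex.I) + (Complex.exp ((θ / 3 : ℂ) * Complex.I))⁻¹) / 2 := by
    rw [← Complex.exp_neg, ← neg_mul]
    push_cast
    rfl
  rw [e]
  exact div_mem (add_mem hw (inv_mem hw)) (ofNat_mem F 2)
end

section
/- Let 𝒪 be the smallest subfield of ℂ that is closed under complex conjugation, closed under taking square roots, and closed under taking cube roots. For every integer n ≥ 1, the root of unity exp(2πi/n) belongs to 𝒪 if and only if n = 2^a · 3^b · p₁ ⋯ p_s for some naturals a, b, s and distinct primes p₁, …, p_s, each greater than 3 and each of the form 2^c · 3^d + 1 for some naturals c, d. -/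
open IntermediateField Module

/-- `m` has no prime factor other than `2` and `3`. (For `m = 0` this is false.) -/
def ThreeSmooth (m : ℕ) : Prop := ∀ q : ℕ, q.Prime → q ∣ m → q = 2 ∨ q = 3

theorem ThreeSmooth.of_dvd {m k : ℕ} (hm : ThreeSmooth m) (h : k ∣ m) : ThreeSmooth k :=
  fun q hq hd => hm q hq (hd.trans h)

theorem ThreeSmooth.mul {m k : ℕ} (hm : ThreeSmooth m) (hk : ThreeSmooth k) :
    ThreeSmooth (m * k) := fun q hq hd =>
  (hq.dvd_mul.1 hd).elim (hm q hq) (hk q hq)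

theorem threeSmooth_one : ThreeSmooth 1 := fun _ hq hd =>
  absurd (Nat.dvd_one.1 hd) hq.ne_one

theorem threeSmooth_two_pow_mul (c d : ℕ) : ThreeSmooth (2 ^ c * 3 ^ d) := fun _ hq hd =>
  (hq.dvd_mul.1 hd).imp
    (fun h => (Nat.prime_dvd_prime_iff_eq hq Nat.prime_two).1 (hq.dvd_of_dvd_pow h))
    (fun h => (Nat.prime_dvd_prime_iff_eq hq Nat.prime_three).1 (hq.dvd_of_dvd_pow h))

theorem exists_eq_two_pow_mul_three_pow_mul {m : ℕ} (hm : m ≠ 0) :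
    ∃ a b k : ℕ, ¬ 2 ∣ k ∧ ¬ 3 ∣ k ∧ m = 2 ^ a * 3 ^ b * k := by
  obtain ⟨a, m', h2, rfl⟩ := Nat.exists_eq_pow_mul_and_not_dvd hm 2 (by norm_num)
  have hm' : m' ≠ 0 := by rintro rfl; simp at h2
  obtain ⟨b, k, h3, rfl⟩ := Nat.exists_eq_pow_mul_and_not_dvd hm' 3 (by norm_num)
  exact ⟨a, b, k, fun h => h2 (h.mul_left _), h3, by ring⟩

theorem ThreeSmooth.exists_eq {m : ℕ} (hm : ThreeSmooth m) :
    ∃ c d : ℕ, m = 2 ^ c * 3 ^ d := by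
  have h0 : m ≠ 0 := by
    rintro rfl
    have := hm 5 (by norm_num) (dvd_zero _)
    omega
  obtain ⟨a, b, k, h2, h3, rfl⟩ := exists_eq_two_pow_mul_three_pow_mul h0
  refine ⟨a, b, ?_⟩
  have hk : k = 1 := by
    by_contra hk
    obtain ⟨q, hq, hqk⟩ := Nat.exists_prime_and_dvd hk
    rcases hm q hq (hqk.mul_left _) with rfl | rfl
    exacts [h2 hqk, h3 hqk]
  simp [hk]

/-! ### Integers whose totient is 3-smooth -/

theorem threeSmooth_totient_prod {ι : Type*} {p : ι → ℕ}
    (hp : ∀ i, Nat.Prime (p i) ∧ 3 < p i ∧ ∃ c d : ℕ, p i = 2 ^ c * 3 ^ d + 1)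
    (hinj : Function.Injective p) (s : Finset ι) :
    ThreeSmooth (∏ i ∈ s, p i).totient := by
  classical
  induction s using Finset.induction_on with
  | empty => simpa using threeSmooth_one
  | insert i s hi ih =>
    rw [Finset.prod_insert hi, Nat.totient_mul]
    · refine ThreeSmooth.mul ?_ ih
      obtain ⟨hpi, -, c, d, hcd⟩ := hp i
      rw [Nat.totient_prime hpi, hcd, Nat.add_sub_cancel]
      exact threeSmooth_two_pow_mul c d
    · refine Nat.Coprime.prod_right fun j hj => ?_
      rw [Nat.coprime_primes (hp i).1 (hp j).1]
      exact fun h => hi (hinj h ▸ hj)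

theorem threeSmooth_totient_iff {n : ℕ} (hn : 1 ≤ n) :
    ThreeSmooth n.totient ↔
      ∃ (a b s : ℕ) (p : Fin s → ℕ),
        (∀ i, Nat.Prime (p i) ∧ 3 < p i ∧ ∃ c d : ℕ, p i = 2 ^ c * 3 ^ d + 1) ∧
        Function.Injective p ∧
        n = 2 ^ a * 3 ^ b * ∏ i, p i := by
  constructor
  · intro h
    obtain ⟨a, b, k, h2, h3, rfl⟩ := exists_eq_two_pow_mul_three_pow_mul (by omega : n ≠ 0)
    have hne : ∀ q, q ∣ k → q ≠ 2 ∧ q ≠ 3 := fun q hq =>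
      ⟨by rintro rfl; exact h2 hq, by rintro rfl; exact h3 hq⟩
    have hk : ThreeSmooth k.totient := h.of_dvd (Nat.totient_dvd_of_dvd (Dvd.intro_left _ rfl))
    -- If `q ^ 2 ∣ k` then `q ∣ φ(q ^ 2) ∣ φ(k)`, forcing `q ∈ {2, 3}`.
    have hsq : Squarefree k := by
      rw [Nat.squarefree_iff_prime_squarefree]
      intro q hq hqq
      have hd : q ∣ k.totient := by
        refine Dvd.dvd.trans ?_ (Nat.totient_dvd_of_dvd hqq)
        rw [← pow_two, Nat.totient_prime_pow_succ hq 1, pow_one]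
        exact dvd_mul_right _ _
      have := hne q ((dvd_mul_right _ _).trans hqq)
      have := hk q hq hd
      tauto
    refine ⟨a, b, k.primeFactors.card, fun i => (k.primeFactors.equivFin.symm i : ℕ), ?_, ?_, ?_⟩
    · intro i
      have hi := (k.primeFactors.equivFin.symm i).2
      beta_reduce
      generalize ((k.primeFactors.equivFin.symm i : k.primeFactors) : ℕ) = q at hi ⊢
      have hq := Nat.prime_of_mem_primeFactors hi
      have hqk := Nat.dvd_of_mem_primeFactors hi
      have := hne q hqk
      have := hq.two_le
      refine ⟨hq, by omega, ?_⟩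
      have hs : ThreeSmooth (q - 1) := by
        rw [← Nat.totient_prime hq]
        exact hk.of_dvd (Nat.totient_dvd_of_dvd hqk)
      obtain ⟨c, d, hcd⟩ := hs.exists_eq
      exact ⟨c, d, by omega⟩
    · exact Subtype.val_injective.comp k.primeFactors.equivFin.symm.injective
    · congr 1
      rw [Equiv.prod_comp k.primeFactors.equivFin.symm (fun x => (x : ℕ)),
        Finset.prod_coe_sort k.primeFactors (fun x => x), Nat.prod_primeFactors_of_squarefree hsq]
  · rintro ⟨a, b, s, p, hp, hinj, rfl⟩
    have hne : ∀ i, (2 ^ a * 3 ^ b).Coprime (p i) := fun i => by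
      have := (hp i).2.1
      refine Nat.Coprime.mul_left (Nat.Coprime.pow_left _ ?_) (Nat.Coprime.pow_left _ ?_)
      · rw [Nat.coprime_primes Nat.prime_two (hp i).1]; omega
      · rw [Nat.coprime_primes Nat.prime_three (hp i).1]; omega
    rw [Nat.totient_mul (Nat.Coprime.prod_right fun i _ => hne i),
      Nat.totient_mul (Nat.Coprime.pow _ _ (by norm_num))]
    refine ThreeSmooth.mul (ThreeSmooth.mul ?_ ?_) (threeSmooth_totient_prod hp hinj _)
    · rcases a with _ | a
      · simpa using threeSmooth_one
      · rw [Nat.totient_prime_pow_succ Nat.prime_two]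
        simpa using threeSmooth_two_pow_mul a 0
    · rcases b with _ | b
      · simpa using threeSmooth_one
      · rw [Nat.totient_prime_pow_succ Nat.prime_three, mul_comm]
        simpa using threeSmooth_two_pow_mul 1 b

/-! ### Towers of square and cube roots -/

/-- `K` is obtained from `ℚ` by finitely many adjunctions of a square root or a cube root. -/
inductive IsRootTower : IntermediateField ℚ ℂ → Prop
  | bot : IsRootTower ⊥
  | adjoin {K : IntermediateField ℚ ℂ} (w : ℂ) (k : ℕ) (hk : k = 2 ∨ k = 3)
      (hK : IsRootTower K) (hw : w ^ k ∈ K) : IsRootTower (K ⊔ ℚ⟮w⟯)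

theorem IsRootTower.sup {K L : IntermediateField ℚ ℂ} (hK : IsRootTower K)
    (hL : IsRootTower L) : IsRootTower (K ⊔ L) := by
  induction hL with
  | bot => simpa using hK
  | adjoin w k hk _ hw ih =>
    rw [← sup_assoc]
    exact .adjoin w k hk ih ((le_sup_right : _ ≤ K ⊔ _) hw)

theorem IsRootTower.map {K : IntermediateField ℚ ℂ} (hK : IsRootTower K) (f : ℂ →ₐ[ℚ] ℂ) :
    IsRootTower (K.map f) := by
  induction hK with
  | bot => simpa using IsRootTower.bot
  | adjoin w k hk _ hw ih =>
    rw [IntermediateField.map_sup, IntermediateField.adjoin_map, Set.image_singleton]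
    exact .adjoin (f w) k hk ih ⟨w ^ k, hw, map_pow f w k⟩

theorem IsRootTower.smooth {K : IntermediateField ℚ ℂ} (hK : IsRootTower K) :
    ThreeSmooth (finrank ℚ K) := by
  induction hK with
  | bot => simpa using threeSmooth_one
  | @adjoin K w k hk _ hw ih =>
    have hk0 : k ≠ 0 := by omega
    -- `w` is a root of `X ^ k - w ^ k`, so its degree over `K` is between `1` and `k ≤ 3`.
    set P : Polynomial K := Polynomial.X ^ k - Polynomial.C ⟨w ^ k, hw⟩ with hP
    have hmonic : P.Monic := Polynomial.monic_X_pow_sub_C _ hk0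
    have hroot : Polynomial.aeval w P = 0 := by
      simp [hP]
    have hint : IsIntegral K w := ⟨P, hmonic, hroot⟩
    have hle : (minpoly K w).natDegree ≤ k := by
      have := Polynomial.natDegree_le_of_dvd (minpoly.dvd K w hroot) hmonic.ne_zero
      rwa [hP, Polynomial.natDegree_X_pow_sub_C] at this
    have hpos := minpoly.natDegree_pos hint
    rw [← IntermediateField.restrictScalars_adjoin_eq_sup]
    change ThreeSmooth (finrank ℚ (IntermediateField.adjoin K {w}))
    rw [← Module.finrank_mul_finrank ℚ K, IntermediateField.adjoin.finrank hint]
    refine ih.mul fun q hq hd => ?_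
    have := Nat.le_of_dvd hpos hd
    have := hq.two_le
    omega

/-- The numbers that lie in a tower of square and cube roots. -/
def rootTowerField : Subfield ℂ where
  carrier := {z | ∃ K : IntermediateField ℚ ℂ, IsRootTower K ∧ z ∈ K}
  mul_mem' := by
    rintro x y ⟨K, hK, hx⟩ ⟨L, hL, hy⟩
    exact ⟨K ⊔ L, hK.sup hL, mul_mem ((le_sup_left : K ≤ K ⊔ L) hx) ((le_sup_right : L ≤ K ⊔ L) hy)⟩
  one_mem' := ⟨⊥, .bot, one_mem _⟩
  add_mem' := by
    rintro x y ⟨K, hK, hx⟩ ⟨L, hL, hy⟩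
    exact ⟨K ⊔ L, hK.sup hL, add_mem ((le_sup_left : K ≤ K ⊔ L) hx) ((le_sup_right : L ≤ K ⊔ L) hy)⟩
  zero_mem' := ⟨⊥, .bot, zero_mem _⟩
  neg_mem' := by
    rintro x ⟨K, hK, hx⟩
    exact ⟨K, hK, neg_mem hx⟩
  inv_mem' := by
    rintro x ⟨K, hK, hx⟩
    exact ⟨K, hK, inv_mem hx⟩

theorem exists_isRootTower {z : ℂ} (hz : z ∈ origamiField) :
    ∃ K : IntermediateField ℚ ℂ, IsRootTower K ∧ z ∈ K := by
  have hroot : ∀ k, (k = 2 ∨ k = 3) → ∀ w : ℂ, w ^ k ∈ rootTowerField → w ∈ rootTowerField := by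
    rintro k hk w ⟨K, hK, hw⟩
    exact ⟨_, .adjoin w k hk hK hw,
      (le_sup_right : ℚ⟮w⟯ ≤ K ⊔ ℚ⟮w⟯) (mem_adjoin_simple_self ℚ w)⟩
  have hle : origamiField ≤ rootTowerField := by
    refine sInf_le ⟨?_, hroot 2 (.inl rfl), hroot 3 (.inr rfl)⟩
    rintro z ⟨K, hK, hz⟩
    exact ⟨K.map (Complex.conjAe.toAlgHom.restrictScalars ℚ), hK.map (Complex.conjAe.toAlgHom.restrictScalars ℚ), z, hz, rfl⟩
  exact hle hz

theorem threeSmooth_totient_of_mem {n : ℕ} (hn : n ≠ 0) {ζ : ℂ} (hζ : IsPrimitiveRoot ζ n)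
    (hmem : ζ ∈ origamiField) : ThreeSmooth n.totient := by
  obtain ⟨K, hK, hz⟩ := exists_isRootTower hmem
  have hfin : finrank ℚ ℚ⟮ζ⟯ = n.totient := by
    rw [IntermediateField.adjoin.finrank ((hζ.isIntegral hn.bot_lt).tower_top),
      ← Polynomial.cyclotomic_eq_minpoly_rat hζ hn.bot_lt, Polynomial.natDegree_cyclotomic]
  rw [← hfin]
  exact hK.smooth.of_dvd (IntermediateField.finrank_dvd_of_le_right (adjoin_simple_le_iff.2 hz))

/-! ### Abelian extensions of a field closed under square and cube roots -/

theorem index_prime_of_isCoatom {G : Type*} [Group G] [IsMulCommutative G] {H : Subgroup G}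
    [H.Normal] (hH : IsCoatom H) : H.index.Prime := by
  have hsimple : IsSimpleGroup (G ⧸ H) := by
    have : Nontrivial (G ⧸ H) := by
      rw [QuotientGroup.nontrivial_iff]; exact hH.1
    refine ⟨fun N _ => ?_⟩
    have hle : H ≤ N.comap (QuotientGroup.mk' H) := by
      intro x hx
      have : (QuotientGroup.mk' H x) = 1 := by simpa using hx
      rw [Subgroup.mem_comap, this]; exact N.one_mem
    have hN := Subgroup.map_comap_eq_self_of_surjective (QuotientGroup.mk'_surjective H) N
    rcases hH.le_iff.1 hle with h | h
    · right; rw [← hN, h]; exact Subgroup.map_top_of_surjective _ (QuotientGroup.mk'_surjective H)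
    · left; rw [← hN, h]; simp
  have : IsMulCommutative (G ⧸ H) := ⟨⟨fun x y => by
    induction x using QuotientGroup.induction_on
    induction y using QuotientGroup.induction_on
    rw [← QuotientGroup.mk_mul, mul_comm', QuotientGroup.mk_mul]⟩⟩
  exact Group.is_simple_iff_prime_card.1 hsimple

/-- Kummer theory over a field closed under `p`-th roots: such a field contains the `p`-th roots
of unity, so a Galois extension of degree `p` would be generated by a `p`-th root. -/
theorem not_finrank_eq_of_root_closed {F : Subfield ℂ} {p : ℕ} (hp : p.Prime)
    (hF : ∀ w : ℂ, w ^ p ∈ F → w ∈ F) {M : Type*} [Field M] [Algebra F M] [FiniteDimensional F M]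
    [IsGalois F M] (f : M →ₐ[F] ℂ) : finrank F M ≠ p := by
  intro hM
  have hη := Complex.isPrimitiveRoot_exp p hp.ne_zero
  have hηF := hF _ (by rw [hη.pow_eq_one]; exact one_mem F)
  have hη' : IsPrimitiveRoot (⟨_, hηF⟩ : F) p :=
    IsPrimitiveRoot.of_map_of_injective (f := F.subtype) hη F.subtype.injective
  have : Fact p.Prime := ⟨hp⟩
  have : IsCyclic Gal(M/F) :=
    isCyclic_of_prime_card (p := p) (by rw [IsGalois.card_aut_eq_finrank, hM])
  obtain ⟨α, ⟨x, hx⟩, hα⟩ := exists_root_adjoin_eq_top_of_isCyclic F M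
    ⟨_, (mem_primitiveRoots finrank_pos).2 (by rw [hM]; exact hη')⟩
  have hfα : f α ∈ F := by
    refine hF _ ?_
    rw [← map_pow, ← hM, ← hx, f.commutes]
    exact x.2
  have hbot : F⟮α⟯ = ⊥ := by
    rw [adjoin_simple_eq_bot_iff, mem_bot]
    exact ⟨⟨f α, hfα⟩, f.injective (f.commutes _)⟩
  have h1 : finrank F M = 1 := by
    rw [← finrank_top', ← hα, hbot, IntermediateField.finrank_bot]
  exact hp.ne_one (hM.symm.trans h1)

theorem finrank_eq_one_of_root_closed {F : Subfield ℂ} (h2 : ∀ w : ℂ, w ^ 2 ∈ F → w ∈ F)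
    (h3 : ∀ w : ℂ, w ^ 3 ∈ F → w ∈ F) (L : IntermediateField F ℂ) [FiniteDimensional F L]
    [IsGalois F L] [IsMulCommutative Gal(L/F)] (hs : ThreeSmooth (finrank F L)) :
    finrank F L = 1 := by
  rcases eq_top_or_exists_le_coatom (⊥ : Subgroup Gal(L/F)) with h | ⟨H, hH, -⟩
  · rw [← IsGalois.card_aut_eq_finrank, ← Subgroup.card_top, ← h, Subgroup.card_bot]
  · exfalso
    have hn : H.Normal := ⟨fun x hx g => by rwa [mul_comm', inv_mul_cancel_left]⟩
    have hp := index_prime_of_isCoatom hH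
    have hM : finrank F (fixedField H) = H.index := by
      rw [finrank_eq_fixingSubgroup_index, fixingSubgroup_fixedField]
    have hdvd : H.index ∣ finrank F L := by
      rw [← IsGalois.card_aut_eq_finrank]; exact H.index_dvd_card
    have : IsGalois F (fixedField H) := IsGalois.of_fixedField_normal_subgroup H
    refine not_finrank_eq_of_root_closed hp ?_ (L.val.comp (fixedField H).val) hM
    rcases hs _ hp hdvd with h | h <;> rw [h] <;> assumption

theorem mem_of_threeSmooth_totient {F : Subfield ℂ} (h2 : ∀ w : ℂ, w ^ 2 ∈ F → w ∈ F)
    (h3 : ∀ w : ℂ, w ^ 3 ∈ F → w ∈ F) {n : ℕ} [NeZero n] {ζ : ℂ} (hζ : IsPrimitiveRoot ζ n)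
    (hs : ThreeSmooth n.totient) : ζ ∈ F := by
  have hint : IsIntegral F ζ := (hζ.isIntegral (NeZero.pos n)).tower_top
  have hcyc : IsCyclotomicExtension {n} F F⟮ζ⟯ := by
    have := hζ.adjoin_isCyclotomicExtension F
    exact IsCyclotomicExtension.equiv {n} F _ (Subalgebra.equivOfEq _ _
      (adjoin_simple_toSubalgebra_of_isAlgebraic hint.isAlgebraic).symm)
  have := IsCyclotomicExtension.finiteDimensional {n} F F⟮ζ⟯
  have := IsCyclotomicExtension.isGalois {n} F F⟮ζ⟯
  have := IsCyclotomicExtension.isMulCommutative {n} F F⟮ζ⟯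
  have hdvd : finrank F F⟮ζ⟯ ∣ n.totient := by
    rw [← IsGalois.card_aut_eq_finrank, ← ZMod.card_units_eq_totient, ← Nat.card_eq_fintype_card]
    exact Subgroup.card_dvd_of_injective _
      ((IsCyclotomicExtension.zeta_spec n F F⟮ζ⟯).autToPow_injective F)
  have h1 := finrank_eq_one_of_root_closed h2 h3 F⟮ζ⟯ (hs.of_dvd hdvd)
  rw [finrank_adjoin_simple_eq_one_iff, mem_bot] at h1
  obtain ⟨x, rfl⟩ := h1
  exact x.2

/-- The regular-polygon characterization: `exp(2πi/n)` is an origami number iff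
`n = 2^a 3^b p₁ ⋯ p_s` with the `pᵢ` distinct primes greater than `3`, each of
the form `2^c 3^d + 1`. -/
theorem origami_root_of_unity_iff (n : ℕ) (hn : 1 ≤ n) :
    Complex.exp (2 * Real.pi * Complex.I / n) ∈ origamiField ↔
      ∃ (a b s : ℕ) (p : Fin s → ℕ),
        (∀ i, Nat.Prime (p i) ∧ 3 < p i ∧ ∃ c d : ℕ, p i = 2 ^ c * 3 ^ d + 1) ∧
        Function.Injective p ∧
        n = 2 ^ a * 3 ^ b * ∏ i, p i := by
  have hn0 : n ≠ 0 := by omega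
  have : NeZero n := ⟨hn0⟩
  have hζ := Complex.isPrimitiveRoot_exp n hn0
  rw [← threeSmooth_totient_iff hn]
  refine ⟨threeSmooth_totient_of_mem hn0 hζ, fun hs => ?_⟩
  rw [origamiField, Subfield.mem_sInf]
  rintro F ⟨-, h2, h3⟩
  exact mem_of_threeSmooth_totient h2 h3 hζ hs
end
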